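/- Assume α = β = δ > 0. Then for every x ∈ K with ‖x − x₀‖ > α one has ‖f(x) − x₀‖ = α, i.e. f maps every sphere S_r(x₀) with r > α into the sphere S_α(x₀). -/

import Mathlib

/-!
In the coordinate `y = x - x₀`, with `u = x₀ - x₁`, `v = x₀ - x₂` and `c = (2a + d) / 3`, the map is
`f x - x₀ = y (c y + u v) / ((y + u) (y + v))`. When `‖u‖ = ‖v‖ = ‖c‖ = α < ‖y‖`, the ultrametric
inequality makes the `y`-term dominate in each of the three sums, so the norm is
`‖y‖ (α ‖y‖) / ‖y‖² = α`; in particular the denominator does not vanish.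
-/

/-- In an ultrametric space a strictly larger left summand determines the norm of a sum. -/
lemma norm_add_of_norm_lt {K : Type*} [NormedField K] [IsUltrametricDist K] {y u : K}
    (h : ‖u‖ < ‖y‖) : ‖y + u‖ = ‖y‖ := by
  rw [IsUltrametricDist.norm_add_eq_max_of_norm_ne_norm h.ne', max_eq_left h.le]

/-- assume `α = β = δ > 0`; then `f` maps every sphere `S_r(x₀)` with
`r > α` into the sphere `S_α(x₀)`. -/
theorem stmt_12 {K : Type*} [NormedField K] [IsUltrametricDist K] [CharZero K]
    (a b d : K) (f : K → K)
    (hf : ∀ x : K, f x =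
      (a * x ^ 2 + b * x + ((a - d) / 3) ^ 3) / (x ^ 2 + d * x + (a - d) ^ 2 / 3 + b))
    (x₀ x₁ x₂ : K) (hx₀ : x₀ = (a - d) / 3)
    (hsum : x₁ + x₂ = -d) (hprod : x₁ * x₂ = (a - d) ^ 2 / 3 + b)
    (δ α β : ℝ) (hδ : δ = ‖(2 * a + d) / 3‖) (hα : α = ‖x₀ - x₁‖) (hβ : β = ‖x₀ - x₂‖)
    (hαβ : α = β) (hβδ : β = δ) (hα0 : 0 < α) :
    ∀ x : K, α < ‖x - x₀‖ → ‖f x - x₀‖ = α := by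
  intro x hx
  have hy0 : 0 < ‖x - x₀‖ := hα0.trans hx
  have hu : ‖x - x₀ + (x₀ - x₁)‖ = ‖x - x₀‖ := norm_add_of_norm_lt (hα ▸ hx)
  have hv : ‖x - x₀ + (x₀ - x₂)‖ = ‖x - x₀‖ :=
    norm_add_of_norm_lt (by rw [← hβ, ← hαβ]; exact hx)
  have hc : ‖(2 * a + d) / 3‖ = α := by rw [← hδ, ← hβδ, ← hαβ]
  have hn : ‖(2 * a + d) / 3 * (x - x₀) + (x₀ - x₁) * (x₀ - x₂)‖ = α * ‖x - x₀‖ := by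
    rw [norm_add_of_norm_lt, norm_mul, hc]
    rw [norm_mul, norm_mul, hc, ← hα, ← hβ, ← hαβ]
    exact mul_lt_mul_of_pos_left hx hα0
  have hden : x ^ 2 + d * x + (a - d) ^ 2 / 3 + b
      = (x - x₀ + (x₀ - x₁)) * (x - x₀ + (x₀ - x₂)) := by
    linear_combination -hprod + x * hsum
  have hD : (x - x₀ + (x₀ - x₁)) * (x - x₀ + (x₀ - x₂)) ≠ 0 := by
    rw [← norm_ne_zero_iff, norm_mul, hu, hv]
    positivity
  have huv : (x₀ - x₁) * (x₀ - x₂) = x₀ ^ 2 + d * x₀ + (a - d) ^ 2 / 3 + b := by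
    linear_combination hprod - x₀ * hsum
  have key : f x - x₀ = (x - x₀) * ((2 * a + d) / 3 * (x - x₀) + (x₀ - x₁) * (x₀ - x₂)) /
      ((x - x₀ + (x₀ - x₁)) * (x - x₀ + (x₀ - x₂))) := by
    rw [hf, hden, eq_div_iff hD, sub_mul, div_mul_cancel₀ _ hD, ← hden, huv, hx₀]
    field_simp
    ring
  rw [key, norm_div, norm_mul, norm_mul, hn, hu, hv]
  field_simp
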